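/- arXiv:2307.13543 — 3 statements merged into one kernel-verified Lean document; each statement's English description precedes it below -/
import Mathlib

section
/- Let Z ⊆ Σ^ℤ be a sofic shift, f : ℝ^n × Σ → ℝ^n a switched vector field (the dynamics F(x, z) = f(x, z_0) depends only on the current symbol), and let C = {C_1, …, C_K} be any g-covering of Z with presentation G. Then the system x(k+1) = f(x(k), z_k) is globally uniformly asymptotically stable over Z if and only if there exists a G-based Lyapunov function for it, i.e. W : ℝ^n × C → ℝ, α₁, α₂ of class K∞ and γ ∈ [0,1) with α₁(|x|) ≤ W(x, C) ≤ α₂(|x|) for all x, C, and W(f(x, i), D) ≤ γ W(x, C) for all x ∈ ℝ^n and all C, D ∈ C, i ∈ Σ such that (s_C, s_D, i) ∈ E and there exists z ∈ C with z_0 = i and σ(z) ∈ D. -/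
open Set Filter Matrix

section Defs

variable {A : Type*}

/-- The shift map on bi-infinite sequences over the alphabet `A`. -/
def shiftMap (z : ℤ → A) : ℤ → A := fun k => z (k + 1)

/-- `s` is a bi-infinite walk, labeled by `z`, in the labeled graph with edge set `E`. -/
def IsLabeledWalk {S : Type*} (E : Set (S × S × A)) (z : ℤ → A) (s : ℤ → S) : Prop :=
  ∀ k : ℤ, (s k, s (k + 1), z k) ∈ E

/-- `Z(G)`: the set of labels of bi-infinite walks of the graph with edge set `E`. -/
def graphLang {S : Type*} (E : Set (S × S × A)) : Set (ℤ → A) :=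
  {z | ∃ s : ℤ → S, IsLabeledWalk E z s}

/-- `Z(G, s₀)`: the set of labels of bi-infinite walks starting (at time `0`) at node `s₀`. -/
def graphLangAt {S : Type*} (E : Set (S × S × A)) (s0 : S) : Set (ℤ → A) :=
  {z | ∃ s : ℤ → S, IsLabeledWalk E z s ∧ s 0 = s0}

/-- A set `Z` of bi-infinite sequences is a sofic shift if it is the set of labels of
bi-infinite walks of some finite labeled graph. -/
def IsSofic (Z : Set (ℤ → A)) : Prop :=
  ∃ (S : Type) (_ : Fintype S) (E : Set (S × S × A)), Z = graphLang E

/-- The graph with node set `Fin K` and edge set `E` is a presentation of the indexed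
covering `C` of `Z`: `Z = Z(G)` and `C j = Z(G, j)` for every node `j`. -/
def IsPresentation {K : ℕ} (E : Set (Fin K × Fin K × A)) (C : Fin K → Set (ℤ → A))
    (Z : Set (ℤ → A)) : Prop :=
  Z = graphLang E ∧ ∀ j : Fin K, C j = graphLangAt E j

/-- `C` is a graph-induced covering of `Z`. -/
def IsGCovering {K : ℕ} (C : Fin K → Set (ℤ → A)) (Z : Set (ℤ → A)) : Prop :=
  ∃ E : Set (Fin K × Fin K × A), IsPresentation E C Z

/-- The forward one-sided sequence `z⁺ = (z 0, z 1, …)`. -/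
def postSeq (z : ℤ → A) : ℕ → A := fun m => z m

/-- The backward one-sided sequence `z⁻ = (…, z (-2), z (-1))`, encoded so that index
`m` holds `z (-(m+1))` (index `0` is `z (-1)`). -/
def preSeq (z : ℤ → A) : ℕ → A := fun m => z (-(m + 1))

/-- Concatenation of a letter with a set of one-sided sequences: for forward sequences this
is `i · B`; for backward sequences (with the encoding of `preSeq`) this is `B · i`. -/
def consSeq (i : A) (B : Set (ℕ → A)) : Set (ℕ → A) :=
  {w | w 0 = i ∧ (fun m => w (m + 1)) ∈ B}

/-- Time inversion of a bi-infinite sequence: `z⁻¹ k = z (-1-k)`. -/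
def timeInv (z : ℤ → A) : ℤ → A := fun k => z (-1 - k)

/-- The transpose graph: edges are reversed, labels kept. -/
def transposeE {S : Type*} (E : Set (S × S × A)) : Set (S × S × A) :=
  {p | (p.2.1, p.1, p.2.2) ∈ E}

/-- Class `K∞` functions. -/
def IsKInf (α : ℝ → ℝ) : Prop :=
  ContinuousOn α (Set.Ici 0) ∧ StrictMonoOn α (Set.Ici 0) ∧ α 0 = 0 ∧
    Tendsto α atTop atTop

/-- Class `KL` functions. -/
def IsKL (β : ℝ → ℝ → ℝ) : Prop :=
  ContinuousOn (fun p : ℝ × ℝ => β p.1 p.2) (Set.Ici 0 ×ˢ Set.Ici 0) ∧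
  (∀ s, 0 ≤ s → ContinuousOn (fun r => β r s) (Set.Ici 0) ∧
      StrictMonoOn (fun r => β r s) (Set.Ici 0) ∧ β 0 s = 0) ∧
  (∀ r, 0 ≤ r → AntitoneOn (fun s => β r s) (Set.Ici 0) ∧
      Tendsto (fun s => β r s) atTop (nhds 0))

/-- The solution map `Φ(k, x₀, z)` of the system `x(k+1) = f(x(k), σ^k z)`. -/
def sol {n : ℕ} (f : (Fin n → ℝ) → (ℤ → A) → Fin n → ℝ) (x0 : Fin n → ℝ) (z : ℤ → A) :
    ℕ → Fin n → ℝ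
  | 0 => x0
  | k + 1 => f (sol f x0 z k) (shiftMap^[k] z)

end Defs

lemma kinf_nonneg {α : ℝ → ℝ} (h : IsKInf α) {s : ℝ} (hs : 0 ≤ s) : 0 ≤ α s := by
  have := h.2.1.monotoneOn (Set.mem_Ici.2 le_rfl) (Set.mem_Ici.2 hs) hs
  rwa [h.2.2.1] at this

lemma kinf_lower (a : ℝ → ℝ) (ha : Monotone a) (hpos : ∀ t, 0 < t → 0 < a t) :
    ∃ α, IsKInf α ∧ ∀ s, 0 < s → s ≤ 1 → α s ≤ a s := by
  have hint : ∀ u v : ℝ, IntervalIntegrable a MeasureTheory.volume u v :=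
    fun u v => ha.intervalIntegrable
  have hlow : ∀ s, 1 ≤ s → (s - 1) * a 1 ≤ ∫ t in (0:ℝ)..s, a t := by
    intro s hs
    rw [← intervalIntegral.integral_add_adjacent_intervals (hint 0 1) (hint 1 s)]
    have h1 : 0 ≤ ∫ t in (0:ℝ)..1, a t := by
      have := intervalIntegral.intervalIntegral_pos_of_pos_on (hint 0 1)
        (fun x hx => hpos x hx.1) one_pos
      exact this.le
    have h2 : ∫ t in (1:ℝ)..s, a 1 ≤ ∫ t in (1:ℝ)..s, a t :=
      intervalIntegral.integral_mono_on hs (by simp) (hint 1 s) (fun x hx => ha hx.1)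
    rw [intervalIntegral.integral_const, smul_eq_mul] at h2
    linarith
  refine ⟨fun s => ∫ t in (0:ℝ)..s, a t, ⟨?_, ?_, ?_, ?_⟩, ?_⟩
  · exact (intervalIntegral.continuous_primitive hint 0).continuousOn
  · intro s hs t ht hst
    have hs' : (0:ℝ) ≤ s := hs
    have := intervalIntegral.intervalIntegral_pos_of_pos_on (hint s t)
        (fun x hx => hpos x (lt_of_le_of_lt hs' hx.1)) hst
    have h2 := intervalIntegral.integral_add_adjacent_intervals (hint 0 s) (hint s t)
    show (∫ t in (0:ℝ)..s, a t) < ∫ t in (0:ℝ)..t, a t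
    linarith
  · simp
  · have h1 : Tendsto (fun s : ℝ => (s - 1) * a 1) atTop atTop :=
      Tendsto.atTop_mul_const (hpos 1 one_pos) (tendsto_atTop_add_const_right _ (-1) tendsto_id)
    refine tendsto_atTop_mono' _ ?_ h1
    filter_upwards [eventually_ge_atTop 1] with s hs using hlow s hs
  · intro s hs hs1
    have h2 : ∫ t in (0:ℝ)..s, a t ≤ ∫ t in (0:ℝ)..s, a s :=
      intervalIntegral.integral_mono_on hs.le (hint 0 s) (by simp) (fun x hx => ha hx.2)
    rw [intervalIntegral.integral_const, smul_eq_mul, sub_zero] at h2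
    have := hpos s hs
    show (∫ t in (0:ℝ)..s, a t) ≤ a s
    nlinarith

lemma kinf_upper (V : ℝ → ℝ) (hV : Monotone V) (h0 : V 0 = 0)
    (hc : Tendsto V (nhdsWithin 0 (Set.Ioi 0)) (nhds 0)) :
    ∃ ρ, IsKInf ρ ∧ ∀ s, 0 ≤ s → V s ≤ ρ s := by
  have hint : ∀ u v : ℝ, IntervalIntegrable V MeasureTheory.volume u v :=
    fun u v => hV.intervalIntegrable
  set P : ℝ → ℝ := fun s => ∫ t in (1:ℝ)..2, V (s * t) with hP
  have hmi : ∀ s, 0 ≤ s → IntervalIntegrable (fun t => V (s * t)) MeasureTheory.volume 1 2 := by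
    intro s hs
    exact Monotone.intervalIntegrable (fun x y hxy => hV (mul_le_mul_of_nonneg_left hxy hs))
  have hPmono : MonotoneOn P (Set.Ici 0) := by
    intro s hs t ht hst
    refine intervalIntegral.integral_mono_on (by norm_num) (hmi s hs) (hmi t ht) ?_
    intro x hx
    exact hV (mul_le_mul_of_nonneg_right hst (by linarith [hx.1]))
  have hPlow : ∀ s, 0 ≤ s → V s ≤ P s := by
    intro s hs
    have : ∫ t in (1:ℝ)..2, V s ≤ P s :=
      intervalIntegral.integral_mono_on (by norm_num) (by simp) (hmi s hs)
        (fun x hx => hV (by nlinarith [hx.1]))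
    rw [intervalIntegral.integral_const, smul_eq_mul] at this
    linarith
  have hPup : ∀ s, 0 ≤ s → P s ≤ V (2 * s) := by
    intro s hs
    have : P s ≤ ∫ t in (1:ℝ)..2, V (2 * s) :=
      intervalIntegral.integral_mono_on (by norm_num) (hmi s hs) (by simp)
        (fun x hx => hV (by nlinarith [hx.2]))
    rw [intervalIntegral.integral_const, smul_eq_mul] at this
    linarith
  have hP0 : P 0 = 0 := by simp [hP, h0]
  have hVnn : ∀ s, 0 ≤ s → 0 ≤ V s := fun s hs => h0 ▸ hV hs
  have hPc : ContinuousOn P (Set.Ici 0) := by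
    intro s hs
    rcases eq_or_lt_of_le (show (0:ℝ) ≤ s from hs) with h | h
    · subst h
      have : ContinuousWithinAt P (Set.Ioi 0) 0 := by
        unfold ContinuousWithinAt
        rw [hP0]
        have h2 : Tendsto (fun s : ℝ => V (2 * s)) (nhdsWithin 0 (Set.Ioi 0)) (nhds 0) := by
          refine hc.comp ?_
          refine tendsto_nhdsWithin_iff.2 ⟨?_, ?_⟩
          · have : Continuous (fun s : ℝ => 2 * s) := by fun_prop
            have := this.tendsto 0
            simp only [mul_zero] at this
            exact this.mono_left nhdsWithin_le_nhds
          · filter_upwards [self_mem_nhdsWithin] with x hx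
            have : (0:ℝ) < x := hx
            show (0:ℝ) < 2 * x
            linarith
        refine tendsto_of_tendsto_of_tendsto_of_le_of_le' tendsto_const_nhds h2 ?_ ?_
        · filter_upwards [self_mem_nhdsWithin] with x hx
          have hx : (0:ℝ) < x := hx
          exact (hVnn x hx.le).trans (hPlow x hx.le)
        · filter_upwards [self_mem_nhdsWithin] with x hx
          have hx : (0:ℝ) < x := hx
          exact hPup x hx.le
      exact continuousWithinAt_Ioi_iff_Ici.1 this
    · have heq : ∀ x : ℝ, 0 < x →
          P x = x⁻¹ * ((∫ t in (0:ℝ)..(x*2), V t) - ∫ t in (0:ℝ)..x, V t) := by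
        intro x hx
        rw [intervalIntegral.integral_interval_sub_left (hint _ _) (hint _ _)]
        simp only [hP]
        rw [intervalIntegral.integral_comp_mul_left V hx.ne']
        simp
      have hprim := intervalIntegral.continuous_primitive hint 0
      have hca : ContinuousAt
          (fun x : ℝ => x⁻¹ * ((∫ t in (0:ℝ)..(x*2), V t) - ∫ t in (0:ℝ)..x, V t)) s := by
        refine (continuousAt_inv₀ h.ne').mul (ContinuousAt.sub ?_ hprim.continuousAt)
        exact (hprim.comp (by fun_prop : Continuous fun x : ℝ => x * 2)).continuousAt
      refine (hca.congr ?_).continuousWithinAt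
      filter_upwards [lt_mem_nhds h] with x hx using (heq x hx).symm
  refine ⟨fun s => P s + s, ⟨hPc.add continuousOn_id, ?_, ?_, ?_⟩, ?_⟩
  · intro s hs t ht hst
    exact add_lt_add_of_le_of_lt (hPmono hs ht hst.le) hst
  · simp [hP0]
  · refine tendsto_atTop_mono' _ ?_ tendsto_id
    filter_upwards [eventually_ge_atTop 0] with s hs
    have := (hVnn s hs).trans (hPlow s hs)
    simp only [id]; linarith
  · intro s hs
    have := hPlow s hs
    show V s ≤ P s + s
    linarith

lemma kl_nonneg {β : ℝ → ℝ → ℝ} (h : IsKL β) {r s : ℝ} (hr : 0 ≤ r) (hs : 0 ≤ s) :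
    0 ≤ β r s := by
  have := (h.2.1 s hs).2.1.monotoneOn (Set.mem_Ici.2 le_rfl) (Set.mem_Ici.2 hr) hr
  simp only [(h.2.1 s hs).2.2] at this
  exact this

lemma kl_pos {β : ℝ → ℝ → ℝ} (h : IsKL β) {r s : ℝ} (hr : 0 < r) (hs : 0 ≤ s) :
    0 < β r s := by
  have := (h.2.1 s hs).2.1 (Set.mem_Ici.2 le_rfl) (Set.mem_Ici.2 hr.le) hr
  simp only [(h.2.1 s hs).2.2] at this
  exact this

lemma kl_mono {β : ℝ → ℝ → ℝ} (h : IsKL β) {r r' s : ℝ} (hr : 0 ≤ r) (hr' : r ≤ r')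
    (hs : 0 ≤ s) : β r s ≤ β r' s :=
  (h.2.1 s hs).2.1.monotoneOn (Set.mem_Ici.2 hr) (Set.mem_Ici.2 (hr.trans hr')) hr'

lemma kl_tendsto_nat {β : ℝ → ℝ → ℝ} (h : IsKL β) {r : ℝ} (hr : 0 ≤ r) :
    Tendsto (fun k : ℕ => β r k) atTop (nhds 0) :=
  (h.2.2 r hr).2.comp tendsto_natCast_atTop_atTop

open Classical in
lemma kl_alpha {β : ℝ → ℝ → ℝ} (h : IsKL β) :
    ∃ α, IsKInf α ∧ ∀ r, 0 < r → ∀ᶠ k : ℕ in atTop, α (β r k) ≤ (1/4 : ℝ) ^ k := by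
  set S : ℝ → Set ℕ := fun s => {k : ℕ | s ≤ β s⁻¹ k} with hS
  have hbdd : ∀ s, 0 < s → BddAbove (S s) := by
    intro s hs
    have := (kl_tendsto_nat h (inv_pos.2 hs).le).eventually_lt_const hs
    obtain ⟨N, hN⟩ := eventually_atTop.1 this
    refine ⟨N, fun k hk => ?_⟩
    by_contra hlt
    have h1 := hN k (by omega)
    have h2 : s ≤ β s⁻¹ k := hk
    linarith
  have hanti : ∀ s t, 0 < s → s ≤ t → sSup (S t) ≤ sSup (S s) := by
    intro s t hs hst
    rcases (S t).eq_empty_or_nonempty with he | hne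
    · rw [he]; simp
    · refine csSup_le_csSup (hbdd s hs) hne ?_
      intro k hk
      have hk : t ≤ β t⁻¹ k := hk
      have := kl_mono h (inv_pos.2 (hs.trans_le hst)).le (inv_anti₀ hs hst) (Nat.cast_nonneg k)
      show s ≤ β s⁻¹ k
      linarith
  obtain ⟨α, hα, hle⟩ := kinf_lower
    (fun t => if t ≤ 0 then 0 else (1/4 : ℝ) ^ (sSup (S t))) (by
      intro s t hst
      by_cases hs : s ≤ 0
      · simp only [hs, if_true]
        split_ifs <;> positivity
      · have ht : ¬ t ≤ 0 := by linarith
        simp only [hs, ht, if_false]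
        exact pow_le_pow_of_le_one (by norm_num) (by norm_num) (hanti s t (not_le.1 hs) hst)) (by
      intro t ht
      simp only [not_le.2 ht, if_false]
      positivity)
  refine ⟨α, hα, fun r hr => ?_⟩
  have ht := kl_tendsto_nat h hr.le
  filter_upwards [ht.eventually_lt_const one_pos, ht.eventually_lt_const (inv_pos.2 hr)]
    with k h1 h2
  have hp : 0 < β r k := kl_pos h hr (Nat.cast_nonneg k)
  refine (hle _ hp h1.le).trans ?_
  simp only [not_le.2 hp, if_false]
  refine pow_le_pow_of_le_one (by norm_num) (by norm_num) (le_csSup (hbdd _ hp) ?_)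
  have h3 : r ≤ (β r k)⁻¹ := (le_inv_comm₀ hp hr).1 h2.le
  exact kl_mono h hr.le h3 (Nat.cast_nonneg k)

lemma kl_split {β : ℝ → ℝ → ℝ} (h : IsKL β) :
    ∃ α ρ, IsKInf α ∧ IsKInf ρ ∧ ∀ r, 0 ≤ r → ∀ k : ℕ, α (β r k) * 2 ^ k ≤ ρ r := by
  obtain ⟨α, hα, hev⟩ := kl_alpha h
  set b : ℝ → ℕ → ℝ := fun r k => α (β (max r 0) k) * 2 ^ k with hb
  have hbmono : ∀ k r r', r ≤ r' → b r k ≤ b r' k := by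
    intro k r r' hr
    refine mul_le_mul_of_nonneg_right ?_ (by positivity)
    refine hα.2.1.monotoneOn (kl_nonneg h (le_max_right _ _) (Nat.cast_nonneg k))
      (kl_nonneg h (le_max_right _ _) (Nat.cast_nonneg k))
      (kl_mono h (le_max_right _ _) (max_le_max_right 0 hr) (Nat.cast_nonneg k))
  have hbnn : ∀ r k, 0 ≤ b r k := fun r k =>
    mul_nonneg (kinf_nonneg hα (kl_nonneg h (le_max_right _ _) (Nat.cast_nonneg k)))
      (by positivity)
  have hbev : ∀ r, 0 < r → ∀ᶠ k : ℕ in atTop, b r k ≤ (1/2 : ℝ) ^ k := by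
    intro r hr
    filter_upwards [hev r hr] with k hk
    simp only [hb, max_eq_left hr.le]
    calc α (β r k) * 2 ^ k ≤ (1/4 : ℝ) ^ k * 2 ^ k :=
          mul_le_mul_of_nonneg_right hk (by positivity)
      _ = (1/2 : ℝ) ^ k := by rw [← mul_pow]; norm_num
  have hbdd : ∀ r, BddAbove (Set.range (b r)) := by
    intro r
    have h1 : ∀ᶠ k : ℕ in atTop, b (max r 1) k ≤ 1 := by
      filter_upwards [hbev (max r 1) (by positivity)] with k hk
      exact hk.trans (pow_le_one₀ (by norm_num) (by norm_num))
    have h2 : ∀ᶠ k : ℕ in atTop, b r k ≤ 1 := by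
      filter_upwards [h1] with k hk
      exact (hbmono k _ _ (le_max_left _ _)).trans hk
    exact Filter.IsBoundedUnder.bddAbove_range ⟨1, by simpa using h2⟩
  obtain ⟨ρ, hρ, hle⟩ := kinf_upper (fun r => ⨆ k, b r k)
    (fun r r' hr => ciSup_mono (hbdd r') (fun k => hbmono k r r' hr))
    (by
      have : ∀ k, b 0 k = 0 := by
        intro k
        simp [hb, (h.2.1 k (Nat.cast_nonneg k)).2.2, hα.2.2.1]
      simp [this])
    (by
      rw [Metric.tendsto_nhds]
      intro ε hε
      have hk1 : ∀ᶠ k : ℕ in atTop, b 1 k ≤ ε / 2 := by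
        have hlim : Tendsto (fun k : ℕ => (1/2 : ℝ) ^ k) atTop (nhds 0) :=
          tendsto_pow_atTop_nhds_zero_of_lt_one (by norm_num) (by norm_num)
        filter_upwards [hbev 1 one_pos, hlim.eventually_lt_const (half_pos hε)] with k h1 h2
        linarith
      obtain ⟨N, hN⟩ := eventually_atTop.1 hk1
      have hsmall : ∀ k : ℕ, ∀ᶠ r in nhdsWithin (0:ℝ) (Set.Ioi 0), b r k ≤ ε / 2 := by
        intro k
        have hβ := (h.2.1 k (Nat.cast_nonneg k))
        have hc : ContinuousOn (fun r => α (β r k)) (Set.Ici 0) :=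
          hα.1.comp hβ.1 (fun r hr => kl_nonneg h hr (Nat.cast_nonneg k))
        have hc2 : ContinuousOn (fun r => α (β r k) * 2 ^ k) (Set.Ici 0) :=
          hc.mul continuousOn_const
        have ht := (hc2 0 (Set.mem_Ici.2 le_rfl)).mono_left
          (nhdsWithin_mono 0 Set.Ioi_subset_Ici_self)
        simp only [hβ.2.2, hα.2.2.1, zero_mul] at ht
        filter_upwards [ht.eventually_lt_const (half_pos hε), self_mem_nhdsWithin] with r hr hr0
        have hr0 : (0:ℝ) < r := hr0
        simp only [hb, max_eq_left hr0.le]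
        exact hr.le
      have hall : ∀ᶠ r in nhdsWithin (0:ℝ) (Set.Ioi 0), ∀ k ∈ Finset.range N, b r k ≤ ε / 2 :=
        (Filter.eventually_all_finset _).2 (fun k _ => hsmall k)
      have hr1 : ∀ᶠ r in nhdsWithin (0:ℝ) (Set.Ioi 0), r < 1 :=
        nhdsWithin_le_nhds (gt_mem_nhds one_pos)
      filter_upwards [hall, hr1] with r hr hr1
      have hup : ⨆ k, b r k ≤ ε / 2 := by
        refine ciSup_le fun k => ?_
        by_cases hk : k < N
        · exact hr k (Finset.mem_range.2 hk)
        · exact (hbmono k r 1 hr1.le).trans (hN k (not_lt.1 hk))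
      have hlo : 0 ≤ ⨆ k, b r k := (hbnn r 0).trans (le_ciSup (hbdd r) 0)
      rw [Real.dist_eq, sub_zero, abs_of_nonneg hlo]
      linarith)
  refine ⟨α, ρ, hα, hρ, fun r hr k => ?_⟩
  have h1 := le_ciSup (hbdd r) k
  have h2 := hle r hr
  simp only [hb, max_eq_left hr] at h1 h2
  exact h1.trans h2

lemma kinf_inv {α : ℝ → ℝ} (h : IsKInf α) :
    ∃ e : ℝ ≃o ℝ, Continuous e.symm ∧ e.symm 0 = 0 ∧ ∀ s, 0 ≤ s → e s = α s := by
  set g : ℝ → ℝ := fun s => α (max s 0) + min s 0 with hg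
  have hgc : Continuous g := by
    have : Continuous fun s : ℝ => α (max s 0) :=
      h.1.comp_continuous (by fun_prop) (fun s => Set.mem_Ici.2 (le_max_right _ _))
    exact this.add (by fun_prop)
  have hgm : StrictMono g := by
    intro s t hst
    rcases lt_or_ge 0 t with ht | ht
    · have h1 : max s 0 < max t 0 := by
        rw [max_eq_left ht.le]; exact max_lt hst ht
      have := h.2.1 (Set.mem_Ici.2 (le_max_right s 0)) (Set.mem_Ici.2 (le_max_right t 0)) h1
      exact add_lt_add_of_lt_of_le this (min_le_min_right 0 hst.le)
    · simp only [hg, max_eq_right ht, max_eq_right (hst.le.trans ht), min_eq_left ht,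
        min_eq_left (hst.le.trans ht)]
      linarith
  have hpos : ∀ s, 0 ≤ s → g s = α s := by
    intro s hs; simp [hg, hs]
  have hneg : ∀ s, s ≤ 0 → g s = s := by
    intro s hs; simp [hg, hs, h.2.2.1]
  have hsurj : Function.Surjective g := by
    refine hgc.surjective ?_ ?_
    · refine h.2.2.2.congr' ?_
      filter_upwards [eventually_ge_atTop 0] with s hs using (hpos s hs).symm
    · refine tendsto_id.congr' ?_
      filter_upwards [eventually_le_atBot 0] with s hs using (hneg s hs).symm
  refine ⟨hgm.orderIsoOfSurjective g hsurj, OrderIso.continuous _, ?_, ?_⟩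
  · rw [OrderIso.symm_apply_eq]
    simp [hneg 0 le_rfl]
  · intro s hs
    simp [hpos s hs]

lemma kl_of_kinf {α₁ α₂ : ℝ → ℝ} (h1 : IsKInf α₁) (h2 : IsKInf α₂) {g : ℝ} (hg0 : 0 < g)
    (hg1 : g < 1) : ∃ β, IsKL β ∧ ∀ r y (k : ℕ), 0 ≤ y → α₁ y ≤ g ^ k * α₂ r → y ≤ β r k := by
  obtain ⟨e, hec, he0, he⟩ := kinf_inv h1
  refine ⟨fun r s => e.symm (g ^ s * α₂ r), ⟨?_, ?_, ?_⟩, ?_⟩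
  · refine hec.comp_continuousOn (ContinuousOn.mul ?_ ?_)
    · exact (Continuous.rpow continuous_const continuous_snd
        (fun _ => Or.inl hg0.ne')).continuousOn
    · exact h2.1.comp continuousOn_fst (fun p hp => hp.1)
  · intro s hs
    refine ⟨hec.comp_continuousOn (continuousOn_const.mul h2.1), ?_, ?_⟩
    · intro r hr r' hr' hrr
      exact e.symm.strictMono (mul_lt_mul_of_pos_left (h2.2.1 hr hr' hrr) (Real.rpow_pos_of_pos hg0 s))
    · simp [h2.2.2.1, he0]
  · intro r hr
    constructor
    · intro s hs t ht hst
      exact e.symm.monotone (mul_le_mul_of_nonneg_right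
        (Real.rpow_le_rpow_of_exponent_ge hg0 hg1.le hst) (kinf_nonneg h2 hr))
    · have h3 : Tendsto (fun s : ℝ => g ^ s * α₂ r) atTop (nhds (0 * α₂ r)) :=
        (tendsto_rpow_atTop_of_base_lt_one g (by linarith) hg1).mul_const _
      have h4 := (hec.tendsto (0 * α₂ r)).comp h3
      rw [zero_mul, he0] at h4
      exact h4
  · intro r y k hy hle
    show y ≤ e.symm (g ^ (k : ℝ) * α₂ r)
    rw [Real.rpow_natCast, OrderIso.le_symm_apply, he y hy]
    exact hle

section sys
variable {A : Type*}

lemma shift_iter (z : ℤ → A) (k : ℕ) (m : ℤ) : (shiftMap^[k] z) m = z (m + k) := by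
  induction k generalizing z with
  | zero => simp
  | succ k ih =>
    rw [Function.iterate_succ_apply, ih]
    simp only [shiftMap]
    congr 1
    push_cast
    ring

lemma sol_succ_left {n : ℕ} (f : (Fin n → ℝ) → A → Fin n → ℝ) (x : Fin n → ℝ)
    (z z' : ℤ → A) (hz : ∀ m : ℕ, z (m + 1) = z' m) (k : ℕ) :
    sol (fun x w => f x (w 0)) x z (k + 1) = sol (fun x w => f x (w 0)) (f x (z 0)) z' k := by
  induction k with
  | zero => simp [sol]
  | succ k ih =>
    rw [sol, ih, sol, shift_iter, shift_iter]
    have := hz k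
    simp only [zero_add, Nat.cast_add, Nat.cast_one, this]

lemma glue {S : Type*} (E : Set (S × S × A)) {j j' : S} {i : A} (hE : (j, j', i) ∈ E)
    {z z' : ℤ → A} (hz : z ∈ graphLangAt E j) (hz' : z' ∈ graphLangAt E j') :
    ∃ w ∈ graphLangAt E j, w 0 = i ∧ ∀ m : ℕ, w (m + 1) = z' m := by
  obtain ⟨s, hs, hs0⟩ := hz
  obtain ⟨s', hs', hs0'⟩ := hz'
  refine ⟨fun k => if k < 0 then z k else if k = 0 then i else z' (k - 1),
    ⟨fun k => if k ≤ 0 then s k else s' (k - 1), ?_, ?_⟩, ?_, ?_⟩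
  · intro k
    rcases lt_trichotomy k 0 with h | h | h
    · have h1 : k + 1 ≤ 0 := by omega
      simp only [h, h.le, h1, if_true]
      exact hs k
    · subst h
      simpa [hs0, hs0'] using hE
    · have h1 : ¬ k ≤ 0 := by omega
      have h2 : ¬ k + 1 ≤ 0 := by omega
      have h3 : ¬ k < 0 := by omega
      have h4 : k ≠ 0 := by omega
      simp only [h1, h2, h3, h4, if_false]
      have := hs' (k - 1)
      simpa using this
  · simp [hs0]
  · simp
  · intro m
    have h1 : ¬ (m : ℤ) + 1 < 0 := by omega
    have h2 : (m : ℤ) + 1 ≠ 0 := by omega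
    simp [h1, h2]

lemma walk_shift {S : Type*} (E : Set (S × S × A)) {z : ℤ → A} {s : ℤ → S}
    (h : IsLabeledWalk E z s) (k : ℕ) : (shiftMap^[k] z) ∈ graphLangAt E (s k) := by
  refine ⟨fun m => s (m + k), fun m => ?_, by simp⟩
  rw [shift_iter]
  have := h (m + k)
  rwa [add_right_comm] at this

end sys

/-- Theorem (finite-covering converse Lyapunov theorem for switched systems): for any
g-covering `C` of `Z` with presentation `E`, the switched system `x(k+1) = f(x(k), z k)`
is GUAS over `Z` iff it admits a `G`-based Lyapunov function. -/
theorem switched_guas_iff_exists_gBased_lyapunov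
    {A : Type*} [Fintype A] {n K : ℕ} (Z : Set (ℤ → A))
    (C : Fin K → Set (ℤ → A)) (E : Set (Fin K × Fin K × A))
    (hpres : IsPresentation E C Z)
    (f : (Fin n → ℝ) → A → Fin n → ℝ) :
    (∃ β : ℝ → ℝ → ℝ, IsKL β ∧
      ∀ (k : ℕ) (x0 : Fin n → ℝ) (z : ℤ → A), z ∈ Z →
        ‖sol (fun x w => f x (w 0)) x0 z k‖ ≤ β ‖x0‖ (k : ℝ)) ↔
    (∃ (W : (Fin n → ℝ) → Fin K → ℝ) (α₁ α₂ : ℝ → ℝ) (γ : ℝ),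
      IsKInf α₁ ∧ IsKInf α₂ ∧ γ ∈ Set.Ico (0 : ℝ) 1 ∧
      (∀ (x : Fin n → ℝ) (j : Fin K), α₁ ‖x‖ ≤ W x j ∧ W x j ≤ α₂ ‖x‖) ∧
      (∀ (x : Fin n → ℝ) (j j' : Fin K) (i : A), (j, j', i) ∈ E →
        (∃ z : ℤ → A, z ∈ C j ∧ z 0 = i ∧ shiftMap z ∈ C j') →
        W (f x i) j' ≤ γ * W x j)) := by
  obtain ⟨hZ, hC⟩ := hpres
  constructor
  · rintro ⟨β, hβ, hst⟩
    obtain ⟨α, ρ, hα, hρ, hb⟩ := kl_split hβ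
    set Φ := fun (x : Fin n → ℝ) (z : ℤ → A) (k : ℕ) => sol (fun x w => f x (w 0)) x z k with hΦ
    set T : (Fin n → ℝ) → Fin K → Set ℝ := fun x j =>
      insert (α ‖x‖) {y | ∃ (k : ℕ) (z : ℤ → A), z ∈ C j ∧ y = α ‖Φ x z k‖ * 2 ^ k} with hT
    have hCZ : ∀ j z, z ∈ C j → z ∈ Z := by
      intro j z hz
      rw [hC j] at hz
      obtain ⟨s, hs, -⟩ := hz
      rw [hZ]
      exact ⟨s, hs⟩
    have hub : ∀ x j, ∀ y ∈ T x j, y ≤ ρ ‖x‖ + α ‖x‖ := by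
      intro x j y hy
      have h1 := kinf_nonneg hρ (norm_nonneg x)
      have h2 := kinf_nonneg hα (norm_nonneg x)
      rcases hy with rfl | ⟨k, z, hz, rfl⟩
      · linarith
      · have h3 := hst k x z (hCZ j z hz)
        have h4 : α ‖Φ x z k‖ ≤ α (β ‖x‖ k) :=
          hα.2.1.monotoneOn (Set.mem_Ici.2 (norm_nonneg _))
            (Set.mem_Ici.2 ((norm_nonneg _).trans h3)) h3
        have h5 := hb ‖x‖ (norm_nonneg x) k
        have h6 : α ‖Φ x z k‖ * 2 ^ k ≤ α (β ‖x‖ k) * 2 ^ k :=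
          mul_le_mul_of_nonneg_right h4 (by positivity)
        linarith
    have hbdd : ∀ x j, BddAbove (T x j) := fun x j => ⟨_, hub x j⟩
    have hne : ∀ x j, (T x j).Nonempty := fun x j => ⟨_, Set.mem_insert _ _⟩
    refine ⟨fun x j => sSup (T x j), α, fun s => ρ s + α s, 1/2, hα, ⟨hρ.1.add hα.1, ?_, ?_, ?_⟩,
      by norm_num, ?_, ?_⟩
    · intro s hs t ht hlt
      exact add_lt_add (hρ.2.1 hs ht hlt) (hα.2.1 hs ht hlt)
    · simp [hρ.2.2.1, hα.2.2.1]
    · exact hρ.2.2.2.atTop_add_atTop hα.2.2.2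
    · intro x j
      exact ⟨le_csSup (hbdd x j) (Set.mem_insert _ _), csSup_le (hne x j) (hub x j)⟩
    · rintro x j j' i hE ⟨z, hz, hz0, -⟩
      refine csSup_le (hne _ _) ?_
      have key : ∀ (k : ℕ) (w : ℤ → A), w ∈ C j →
          α ‖Φ x w k‖ * 2 ^ k ≤ sSup (T x j) := fun k w hw =>
        le_csSup (hbdd x j) (Set.mem_insert_of_mem _ ⟨k, w, hw, rfl⟩)
      intro y hy
      rcases hy with rfl | ⟨k, z', hz', rfl⟩
      · have h1 := key 1 z hz
        have h2 : Φ x z 1 = f x i := by simp [hΦ, sol, hz0]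
        rw [h2] at h1
        linarith
      · rw [hC] at hz hz'
        obtain ⟨w, hw, hw0, hwm⟩ := glue E hE hz hz'
        rw [← hC] at hw
        have h1 := key (k + 1) w hw
        have h2 : Φ x w (k + 1) = Φ (f x i) z' k := by
          have := sol_succ_left f x w z' hwm k
          rw [hw0] at this
          exact this
        rw [h2, pow_succ] at h1
        linarith
  · rintro ⟨W, α₁, α₂, γ, h1, h2, hγ, hW, hdec⟩
    have hg0 : 0 < max γ (1/2) := by positivity
    have hg1 : max γ (1/2) < 1 := max_lt hγ.2 (by norm_num)
    obtain ⟨β, hβ, hle⟩ := kl_of_kinf h1 h2 hg0 hg1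
    refine ⟨β, hβ, fun k x0 z hz => ?_⟩
    rw [hZ] at hz
    obtain ⟨s, hs⟩ := hz
    have hWnn : ∀ x j, 0 ≤ W x j := fun x j =>
      (kinf_nonneg h1 (norm_nonneg x)).trans (hW x j).1
    have hind : ∀ k : ℕ, W (sol (fun x w => f x (w 0)) x0 z k) (s k)
        ≤ (max γ (1/2)) ^ k * W x0 (s 0) := by
      intro k
      induction k with
      | zero => simp [sol]
      | succ k ih =>
        have hd := hdec (sol (fun x w => f x (w 0)) x0 z k) (s k) (s (k + 1)) (z k) (hs k)
          ⟨shiftMap^[k] z, by rw [hC]; exact walk_shift E hs k, by simp [shift_iter], by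
            rw [hC, ← Function.iterate_succ_apply' shiftMap]
            have := walk_shift E hs (k + 1)
            push_cast at this
            exact this⟩
        have hsol : sol (fun x w => f x (w 0)) x0 z (k + 1)
            = f (sol (fun x w => f x (w 0)) x0 z k) (z k) := by
          rw [sol, shift_iter, zero_add]
        rw [hsol]
        push_cast
        calc _ ≤ γ * W (sol (fun x w => f x (w 0)) x0 z k) (s k) := hd
          _ ≤ max γ (1/2) * W (sol (fun x w => f x (w 0)) x0 z k) (s k) :=
            mul_le_mul_of_nonneg_right (le_max_left _ _) (hWnn _ _)
          _ ≤ max γ (1/2) * ((max γ (1/2)) ^ k * W x0 (s 0)) :=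
            mul_le_mul_of_nonneg_left ih hg0.le
          _ = _ := by ring
    refine hle _ _ k (norm_nonneg _) ?_
    exact ((hW _ (s k)).1.trans (hind k)).trans
      (mul_le_mul_of_nonneg_left (hW _ _).2 (by positivity))
end

section
/- Let Z ⊆ Σ^ℤ be a shift of M-finite type, A : Σ → ℝ^{n×n}, and consider the switched linear system x(k+1) = A(z_k) x(k) over Z. Fix γ ∈ [0,1). The following are equivalent: (1) for every γ̃ ∈ (γ, 1), the system is uniformly exponentially stable over Z with decay rate γ̃; (2) for every γ̃ ∈ (γ, 1), there exist K ≥ M, k ∈ {0, …, K}, constants M₁, M₂ > 0 and a map Q : Σ^K ∩ L(Z) → S^n_+ into the symmetric positive definite n×n matrices such that M₁ I_n ⪯ Q(w) ⪯ M₂ I_n for every node w of G_{K,k}(Z), and A(h)ᵀ Q(v) A(h) ≺ γ̃² Q(w) for every edge (w, v, h) of G_{K,k}(Z). -/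
open Set Filter Matrix

section DeBruijn

variable {A : Type*}

/-- A word `w` of length `k` belongs to the language `L(Z)`: it occurs as a consecutive
block of some element of `Z`. -/
def inLang (Z : Set (ℤ → A)) {k : ℕ} (w : Fin k → A) : Prop :=
  ∃ z ∈ Z, ∃ m : ℤ, ∀ t : Fin k, z (m + (t.val : ℤ)) = w t

/-- `Z` is a shift of `M`-finite type: it is cut out by a set of allowed blocks of
length `M + 1`. -/
def IsSFT (Z : Set (ℤ → A)) (M : ℕ) : Prop :=
  ∃ F : Set (Fin (M + 1) → A),
    Z = {z : ℤ → A | ∀ m : ℤ, (fun t : Fin (M + 1) => z (m + (t.val : ℤ))) ∈ F}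

/-- The edge set of the `Z`-De Bruijn graph of order `K` and position `k`: nodes are the
words of `Σ^K ∩ L(Z)`, and `(w, v, h)` is an edge iff the suffix of `w` equals the prefix
of `v` and moreover `v (K-1) = h` if `k = 0`, or `w (K-k) = h` if `1 ≤ k ≤ K`. -/
def deBruijnE (Z : Set (ℤ → A)) (K k : ℕ) :
    Set ((Fin K → A) × (Fin K → A) × A) :=
  {p | inLang Z p.1 ∧ inLang Z p.2.1 ∧
    (∀ (t : ℕ) (ht : t + 1 < K), p.1 ⟨t + 1, ht⟩ = p.2.1 ⟨t, Nat.lt_of_succ_lt ht⟩) ∧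
    (if k = 0 then ∀ t : Fin K, (t.val : ℕ) = K - 1 → p.2.1 t = p.2.2
     else ∀ t : Fin K, (t.val : ℕ) = K - k → p.1 t = p.2.2)}

/-- The reversal `w^⊤ = (i_{K-1}, …, i_0)` of a word `w = (i_0, …, i_{K-1})`. -/
def wordRev {K : ℕ} (w : Fin K → A) : Fin K → A :=
  fun t => w ⟨K - 1 - t.val, by have := t.isLt; omega⟩

end DeBruijn

/-- Transition matrix along a one-sided sequence. -/
def transP {A : Type*} {n : ℕ} (B : A → Matrix (Fin n) (Fin n) ℝ) (s : ℕ → A) :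
    ℕ → Matrix (Fin n) (Fin n) ℝ
  | 0 => 1
  | j + 1 => B (s j) * transP B s j

theorem transP_congr {A : Type*} {n : ℕ} (B : A → Matrix (Fin n) (Fin n) ℝ) (s t : ℕ → A)
    (j : ℕ) (h : ∀ i < j, s i = t i) : transP B s j = transP B t j := by
  induction j with
  | zero => rfl
  | succ j ih =>
    simp only [transP]
    rw [h j (by omega), ih (fun i hi => h i (by omega))]

theorem transP_succ {A : Type*} {n : ℕ} (B : A → Matrix (Fin n) (Fin n) ℝ) (s : ℕ → A)
    (j : ℕ) : transP B s (j + 1) = transP B (fun i => s (i + 1)) j * B (s 0) := by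
  induction j with
  | zero => simp [transP]
  | succ j ih =>
    rw [transP, ih, transP, Matrix.mul_assoc]

theorem shiftMap_iter {A : Type*} (z : ℤ → A) (k : ℕ) (m : ℤ) :
    (shiftMap^[k] z) m = z (m + k) := by
  induction k generalizing m with
  | zero => simp
  | succ k ih =>
    rw [Function.iterate_succ_apply', shiftMap, ih]
    congr 1; push_cast; ring

theorem sol_eq_transP {A : Type*} {n : ℕ} (B : A → Matrix (Fin n) (Fin n) ℝ)
    (x0 : Fin n → ℝ) (z : ℤ → A) (k : ℕ) :
    sol (fun x w => (B (w 0)).mulVec x) x0 z k = (transP B (fun i => z i) k).mulVec x0 := by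
  induction k with
  | zero => simp [sol, transP]
  | succ k ih =>
    rw [sol, ih, transP, shiftMap_iter, ← Matrix.mulVec_mulVec]
    simp

theorem norm_sq_le_dot {n : ℕ} (x : Fin n → ℝ) : ‖x‖ ^ 2 ≤ x ⬝ᵥ x := by
  have h0 : 0 ≤ x ⬝ᵥ x := by
    simp only [dotProduct]
    exact Finset.sum_nonneg fun i _ => mul_self_nonneg _
  have : ‖x‖ ≤ Real.sqrt (x ⬝ᵥ x) := by
    rw [pi_norm_le_iff_of_nonneg (Real.sqrt_nonneg _)]
    intro i
    rw [Real.norm_eq_abs]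
    apply Real.abs_le_sqrt
    rw [dotProduct, sq]
    exact Finset.single_le_sum (f := fun i => x i * x i)
      (fun i _ => mul_self_nonneg _) (Finset.mem_univ i)
  calc ‖x‖ ^ 2 ≤ Real.sqrt (x ⬝ᵥ x) ^ 2 := by gcongr
    _ = _ := Real.sq_sqrt h0

theorem dot_le_norm_sq {n : ℕ} (x : Fin n → ℝ) : x ⬝ᵥ x ≤ n * ‖x‖ ^ 2 := by
  rw [dotProduct]
  calc ∑ i, x i * x i ≤ ∑ i : Fin n, ‖x‖ ^ 2 := by
        apply Finset.sum_le_sum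
        intro i _
        have := norm_le_pi_norm x i
        rw [← abs_mul_abs_self, ← sq]
        rw [Real.norm_eq_abs] at this
        gcongr
    _ = _ := by simp

theorem sft_shift {A : Type*} {Z : Set (ℤ → A)} {M : ℕ} (hZ : IsSFT Z M) {z : ℤ → A}
    (hz : z ∈ Z) (m : ℤ) : (fun k => z (m + k)) ∈ Z := by
  obtain ⟨F, rfl⟩ := hZ
  intro p
  have := hz (m + p)
  simpa [add_assoc] using this

theorem quad_smul_one {n : ℕ} (c : ℝ) (x : Fin n → ℝ) :
    x ⬝ᵥ ((c • (1 : Matrix (Fin n) (Fin n) ℝ)) *ᵥ x) = c * (x ⬝ᵥ x) := by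
  simp [Matrix.smul_mulVec]

theorem quad_conj {n : ℕ} (B C : Matrix (Fin n) (Fin n) ℝ) (x : Fin n → ℝ) :
    x ⬝ᵥ ((Bᵀ * C * B) *ᵥ x) = (B *ᵥ x) ⬝ᵥ (C *ᵥ (B *ᵥ x)) := by
  rw [← Matrix.mulVec_mulVec, ← Matrix.mulVec_mulVec, Matrix.dotProduct_mulVec,
    Matrix.vecMul_transpose]

theorem ues_of_lyap {A : Type*} {n : ℕ} (Z : Set (ℤ → A))
    (B : A → Matrix (Fin n) (Fin n) ℝ) (g : ℝ) (hg : 0 < g) (K kk : ℕ) (hkk : kk ≤ K)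
    (M₁ M₂ : ℝ) (h1 : 0 < M₁) (h2 : 0 < M₂)
    (Q : (Fin K → A) → Matrix (Fin n) (Fin n) ℝ)
    (hQ : ∀ w : Fin K → A, inLang Z w →
          (Q w - M₁ • (1 : Matrix (Fin n) (Fin n) ℝ)).PosSemidef ∧
          (M₂ • (1 : Matrix (Fin n) (Fin n) ℝ) - Q w).PosSemidef)
    (hE : ∀ (w v : Fin K → A) (h : A), (w, v, h) ∈ deBruijnE Z K kk →
          (g ^ 2 • Q w - (B h)ᵀ * Q v * B h).PosDef) :
    ∃ c : ℝ, 0 < c ∧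
      ∀ (k : ℕ) (x0 : Fin n → ℝ) (z : ℤ → A), z ∈ Z →
        ‖sol (fun x w => (B (w 0)).mulVec x) x0 z k‖ ≤ c * g ^ k * ‖x0‖ := by
  refine ⟨Real.sqrt (M₂ * (n + 1) / M₁), by positivity, ?_⟩
  intro k x0 z hz
  rw [sol_eq_transP]
  set w : ℕ → Fin K → A := fun t j => z ((t : ℤ) - K + kk + j) with hw
  have hwL : ∀ t, inLang Z (w t) := fun t => ⟨z, hz, (t : ℤ) - K + kk, fun j => rfl⟩
  have hed : ∀ t : ℕ, (w t, w (t + 1), z t) ∈ deBruijnE Z K kk := by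
    intro t
    refine ⟨hwL _, hwL _, ?_, ?_⟩
    · intro i hi
      simp only [hw]
      congr 1; push_cast; ring
    · split_ifs with h0
      · intro i hi
        simp only [hw]
        have := i.isLt
        congr 1; push_cast; omega
      · intro i hi
        simp only [hw]
        have := i.isLt
        congr 1; omega
  set y : ℕ → Fin n → ℝ := fun t => transP B (fun i => z i) t *ᵥ x0 with hy
  have hV : ∀ t, y t ⬝ᵥ (Q (w t) *ᵥ y t) ≤ (g ^ 2) ^ t * (x0 ⬝ᵥ (Q (w 0) *ᵥ x0)) := by
    intro t
    induction t with
    | zero => simp [hy, transP]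
    | succ t ih =>
      have hp := (hE _ _ _ (hed t)).posSemidef.dotProduct_mulVec_nonneg (y t)
      rw [star_trivial, Matrix.sub_mulVec, dotProduct_sub, quad_conj, Matrix.smul_mulVec,
        dotProduct_smul, smul_eq_mul] at hp
      have hyy : y (t + 1) = B (z t) *ᵥ y t := by
        simp [hy, transP, Matrix.mulVec_mulVec]
      rw [hyy, pow_succ']
      have := mul_le_mul_of_nonneg_left ih (sq_nonneg g)
      linarith
  have ha := (hQ _ (hwL k)).1.dotProduct_mulVec_nonneg (y k)
  have hb := (hQ _ (hwL 0)).2.dotProduct_mulVec_nonneg x0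
  rw [star_trivial, Matrix.sub_mulVec, dotProduct_sub, quad_smul_one] at ha hb
  have hc := hV k
  have hn1 := norm_sq_le_dot (y k)
  have hn2 := dot_le_norm_sq x0
  have key : M₁ * ‖y k‖ ^ 2 ≤ (g ^ 2) ^ k * (M₂ * ((n + 1) * ‖x0‖ ^ 2)) := by
    calc M₁ * ‖y k‖ ^ 2 ≤ M₁ * (y k ⬝ᵥ y k) := by gcongr
      _ ≤ y k ⬝ᵥ (Q (w k) *ᵥ y k) := by linarith
      _ ≤ _ := hc
      _ ≤ (g ^ 2) ^ k * (M₂ * (x0 ⬝ᵥ x0)) := by gcongr; linarith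
      _ ≤ _ := by gcongr; nlinarith [sq_nonneg ‖x0‖]
  have hfin : ‖y k‖ ^ 2 ≤ (Real.sqrt (M₂ * (n + 1) / M₁) * g ^ k * ‖x0‖) ^ 2 := by
    rw [mul_pow, mul_pow, Real.sq_sqrt (by positivity)]
    rw [← mul_le_mul_iff_right₀ h1]
    refine key.trans (le_of_eq ?_)
    field_simp
    ring
  exact le_of_sq_le_sq hfin (by positivity)

theorem lyap_of_ues {A : Type*} {n : ℕ} (Z : Set (ℤ → A)) (M : ℕ) (hZ : IsSFT Z M)
    (B : A → Matrix (Fin n) (Fin n) ℝ) (g g' : ℝ) (hg' : 0 < g') (hg : g' < g)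
    (c : ℝ) (hc : 0 < c)
    (H : ∀ (k : ℕ) (x0 : Fin n → ℝ) (z : ℤ → A), z ∈ Z →
        ‖sol (fun x w => (B (w 0)).mulVec x) x0 z k‖ ≤ c * g' ^ k * ‖x0‖) :
    ∃ K kk : ℕ, M ≤ K ∧ kk ≤ K ∧
      ∃ M₁ M₂ : ℝ, 0 < M₁ ∧ 0 < M₂ ∧
      ∃ Q : (Fin K → A) → Matrix (Fin n) (Fin n) ℝ,
        (∀ w : Fin K → A, inLang Z w →
          (Q w - M₁ • (1 : Matrix (Fin n) (Fin n) ℝ)).PosSemidef ∧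
          (M₂ • (1 : Matrix (Fin n) (Fin n) ℝ) - Q w).PosSemidef) ∧
        (∀ (w v : Fin K → A) (h : A), (w, v, h) ∈ deBruijnE Z K kk →
          (g ^ 2 • Q w - (B h)ᵀ * Q v * B h).PosDef) := by
  have hg0 : 0 < g := hg'.trans hg
  obtain ⟨r, hr⟩ : ∃ r : ℝ, r = (g ^ 2)⁻¹ := ⟨_, rfl⟩
  have hr0 : 0 < r := by rw [hr]; positivity
  have hgr : g ^ 2 * r = 1 := by rw [hr]; field_simp
  set q : ℝ := g' ^ 2 * r with hq
  have hq0 : 0 < q := by positivity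
  have hq1 : q < 1 := by
    rw [← hgr, hq]; gcongr
  -- choose K
  obtain ⟨N, hN⟩ : ∃ N : ℕ, q ^ N < (n * c ^ 2 + 1)⁻¹ :=
    exists_pow_lt_of_lt_one (by positivity) hq1
  obtain ⟨L, hLM, hLN⟩ : ∃ L : ℕ, M ≤ L ∧ N ≤ L := ⟨max M N, le_max_left _ _, le_max_right _ _⟩
  have hK : n * c ^ 2 * q ^ (L + 1) < 1 := by
    have h1 : q ^ (L + 1) < (n * c ^ 2 + 1)⁻¹ :=
      lt_of_le_of_lt (pow_le_pow_of_le_one hq0.le hq1.le (by omega)) hN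
    have h2 : (n * c ^ 2 + 1) * q ^ (L + 1) < 1 := by
      have h3 : (0:ℝ) < n * c ^ 2 + 1 := by positivity
      calc _ < (n * c ^ 2 + 1) * (n * c ^ 2 + 1)⁻¹ := by gcongr
        _ = 1 := mul_inv_cancel₀ h3.ne'
    have : 0 < q ^ (L + 1) := by positivity
    linarith
  -- extension of words
  set e : (Fin (L + 1) → A) → ℕ → A := fun w t => w ⟨min t L, by omega⟩ with he
  have hbound : ∀ w : Fin (L + 1) → A, inLang Z w → ∀ j ≤ L + 1, ∀ x : Fin n → ℝ,
      (transP B (e w) j *ᵥ x) ⬝ᵥ (transP B (e w) j *ᵥ x)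
        ≤ n * c ^ 2 * (g' ^ 2) ^ j * (x ⬝ᵥ x) := by
    rintro w ⟨z, hz, m, hm⟩ j hj x
    have h1 := H j x _ (sft_shift hZ hz m)
    rw [sol_eq_transP] at h1
    have h2 : transP B (fun i : ℕ => z (m + i)) j = transP B (e w) j := by
      apply transP_congr
      intro i hi
      have := hm ⟨i, by omega⟩
      simp only [he]
      rw [this]
      congr 1
      ext
      simp only []
      omega
    rw [h2] at h1
    calc _ ≤ n * ‖transP B (e w) j *ᵥ x‖ ^ 2 := dot_le_norm_sq _
      _ ≤ n * (c * g' ^ j * ‖x‖) ^ 2 := by gcongr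
      _ = n * c ^ 2 * (g' ^ 2) ^ j * ‖x‖ ^ 2 := by ring
      _ ≤ _ := by gcongr; exact norm_sq_le_dot x
  set Q : (Fin (L + 1) → A) → Matrix (Fin n) (Fin n) ℝ := fun w =>
    ∑ j ∈ Finset.range (L + 1), r ^ j • ((transP B (e w) j)ᵀ * transP B (e w) j) with hQ
  have hQherm : ∀ w, (Q w).IsHermitian := by
    intro w
    rw [Matrix.IsHermitian, Matrix.conjTranspose_eq_transpose_of_trivial]
    simp [hQ, Matrix.transpose_sum, Matrix.transpose_mul]
  have hQform : ∀ w x, x ⬝ᵥ (Q w *ᵥ x) = ∑ j ∈ Finset.range (L + 1),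
      r ^ j * ((transP B (e w) j *ᵥ x) ⬝ᵥ (transP B (e w) j *ᵥ x)) := by
    intro w x
    simp only [hQ, Matrix.sum_mulVec, dotProduct_sum]
    apply Finset.sum_congr rfl
    intro j _
    have := quad_conj (transP B (e w) j) 1 x
    rw [Matrix.mul_one, Matrix.one_mulVec] at this
    rw [Matrix.smul_mulVec, dotProduct_smul, this, smul_eq_mul]
  have hdn : ∀ x : Fin n → ℝ, 0 ≤ x ⬝ᵥ x := fun x => (sq_nonneg _).trans (norm_sq_le_dot x)
  have h1herm : ∀ a : ℝ, (a • (1 : Matrix (Fin n) (Fin n) ℝ)).IsHermitian := by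
    intro a
    rw [Matrix.IsHermitian, Matrix.conjTranspose_eq_transpose_of_trivial]
    simp
  refine ⟨L + 1, L + 1, by omega, le_rfl, 1,
    1 + ∑ j ∈ Finset.range (L + 1), r ^ j * (n * c ^ 2 * (g' ^ 2) ^ j), one_pos, by positivity,
    Q, ?_, ?_⟩
  · intro w hw
    constructor
    · refine Matrix.PosSemidef.of_dotProduct_mulVec_nonneg ((hQherm w).sub (h1herm _)) ?_
      intro x
      rw [star_trivial, Matrix.sub_mulVec, dotProduct_sub, quad_smul_one, hQform,
        Finset.sum_range_succ']
      have : 0 ≤ ∑ j ∈ Finset.range L, r ^ (j + 1) *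
          ((transP B (e w) (j + 1) *ᵥ x) ⬝ᵥ (transP B (e w) (j + 1) *ᵥ x)) :=
        Finset.sum_nonneg fun j _ => mul_nonneg (by positivity) (hdn _)
      simp only [transP, pow_zero, Matrix.one_mulVec] at this ⊢
      linarith
    · refine Matrix.PosSemidef.of_dotProduct_mulVec_nonneg ((h1herm _).sub (hQherm w)) ?_
      intro x
      rw [star_trivial, Matrix.sub_mulVec, dotProduct_sub, quad_smul_one, hQform, add_mul,
        Finset.sum_mul]
      have : ∑ j ∈ Finset.range (L + 1),
          r ^ j * ((transP B (e w) j *ᵥ x) ⬝ᵥ (transP B (e w) j *ᵥ x)) ≤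
          ∑ j ∈ Finset.range (L + 1), r ^ j * (n * c ^ 2 * (g' ^ 2) ^ j) * (x ⬝ᵥ x) := by
        apply Finset.sum_le_sum
        intro j hj
        rw [mul_assoc]
        have := hbound w hw j (by have := Finset.mem_range.1 hj; omega) x
        gcongr
      linarith [hdn x]
  · rintro w v h ⟨hw, hv, hs, hh⟩
    rw [if_neg (by omega)] at hh
    simp only at hw hv hs hh
    have hh0 : e w 0 = h := by
      simp only [he]
      exact hh _ (by simp)
    have hstep : ∀ j ≤ L, transP B (e v) j * B h = transP B (e w) (j + 1) := by
      intro j hj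
      rw [transP_succ, hh0]
      congr 1
      apply transP_congr
      intro i hi
      simp only [he]
      have := hs i (by omega)
      have e1 : min i L = i := by omega
      have e2 : min (i + 1) L = i + 1 := by omega
      simp only [e1, e2]
      exact this.symm
    have hCherm : ((B h)ᵀ * Q v * B h).IsHermitian := by
      have := Matrix.isHermitian_conjTranspose_mul_mul (B h) (hQherm v)
      rwa [Matrix.conjTranspose_eq_transpose_of_trivial] at this
    have hsherm : (g ^ 2 • Q w).IsHermitian := by
      have := hQherm w
      rw [Matrix.IsHermitian, Matrix.conjTranspose_eq_transpose_of_trivial] at this ⊢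
      rw [Matrix.transpose_smul, this]
    refine Matrix.PosDef.of_dotProduct_mulVec_pos (hsherm.sub hCherm) ?_
    intro x hx
    rw [star_trivial, Matrix.sub_mulVec, dotProduct_sub, quad_conj, Matrix.smul_mulVec,
        dotProduct_smul, smul_eq_mul, hQform, hQform]
    set f : ℕ → ℝ := fun j => (transP B (e w) j *ᵥ x) ⬝ᵥ (transP B (e w) j *ᵥ x) with hf
    have hs2 : ∑ j ∈ Finset.range (L + 1), r ^ j *
        ((transP B (e v) j *ᵥ (B h *ᵥ x)) ⬝ᵥ (transP B (e v) j *ᵥ (B h *ᵥ x)))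
        = g ^ 2 * ∑ j ∈ Finset.range (L + 1), r ^ (j + 1) * f (j + 1) := by
      rw [Finset.mul_sum]
      apply Finset.sum_congr rfl
      intro j hj
      rw [Matrix.mulVec_mulVec, hstep j (by have := Finset.mem_range.1 hj; omega)]
      calc r ^ j * f (j + 1) = (g ^ 2 * r) * (r ^ j * f (j + 1)) := by rw [hgr, one_mul]
        _ = _ := by ring
    rw [hs2, ← mul_sub, ← Finset.sum_sub_distrib,
      Finset.sum_range_sub' (fun j => r ^ j * f j)]
    have hf0 : f 0 = x ⬝ᵥ x := by simp [hf, transP]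
    have hxx : 0 < x ⬝ᵥ x := by
      have : 0 < ‖x‖ := norm_pos_iff.2 hx
      exact lt_of_lt_of_le (by positivity) (norm_sq_le_dot x)
    have hb := hbound w hw (L + 1) le_rfl x
    have hb2 : r ^ (L + 1) * f (L + 1) ≤ n * c ^ 2 * q ^ (L + 1) * (x ⬝ᵥ x) := by
      calc _ ≤ r ^ (L + 1) * (n * c ^ 2 * (g' ^ 2) ^ (L + 1) * (x ⬝ᵥ x)) := by gcongr
        _ = _ := by rw [hq]; ring
    have hb3 : n * c ^ 2 * q ^ (L + 1) * (x ⬝ᵥ x) < 1 * (x ⬝ᵥ x) := by gcongr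
    apply mul_pos (by positivity)
    rw [hf0]
    linarith

/-- Theorem (asymptotic converse Lyapunov theorem): for a switched linear system over a
shift `Z` of `M`-finite type and fixed `γ ∈ [0,1)`, UES with every decay rate
`γ̃ ∈ (γ,1)` is equivalent to the existence, for every `γ̃ ∈ (γ,1)`, of a quadratic
`G_{K,k}(Z)`-based Lyapunov function for some `K ≥ M` and `k ∈ {0,…,K}`. -/
theorem switched_linear_ues_iff_exists_deBruijn_quadratic_lyapunov
    {A : Type*} [Fintype A] {n : ℕ} (Z : Set (ℤ → A)) (M : ℕ) (hZ : IsSFT Z M)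
    (Amap : A → Matrix (Fin n) (Fin n) ℝ) (γ : ℝ) (hγ : γ ∈ Set.Ico (0 : ℝ) 1) :
    (∀ γt ∈ Set.Ioo γ 1, ∃ c : ℝ, 0 < c ∧
      ∀ (k : ℕ) (x0 : Fin n → ℝ) (z : ℤ → A), z ∈ Z →
        ‖sol (fun x w => (Amap (w 0)).mulVec x) x0 z k‖ ≤ c * γt ^ k * ‖x0‖) ↔
    (∀ γt ∈ Set.Ioo γ 1, ∃ K kk : ℕ, M ≤ K ∧ kk ≤ K ∧
      ∃ M₁ M₂ : ℝ, 0 < M₁ ∧ 0 < M₂ ∧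
      ∃ Q : (Fin K → A) → Matrix (Fin n) (Fin n) ℝ,
        (∀ w : Fin K → A, inLang Z w →
          (Q w - M₁ • (1 : Matrix (Fin n) (Fin n) ℝ)).PosSemidef ∧
          (M₂ • (1 : Matrix (Fin n) (Fin n) ℝ) - Q w).PosSemidef) ∧
        (∀ (w v : Fin K → A) (h : A), (w, v, h) ∈ deBruijnE Z K kk →
          (γt ^ 2 • Q w - (Amap h)ᵀ * Q v * Amap h).PosDef)) := by
  constructor
  · intro H γt hγt
    obtain ⟨g', h1, h2⟩ := exists_between hγt.1
    obtain ⟨c, hc, Hc⟩ := H g' ⟨h1, h2.trans hγt.2⟩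
    exact lyap_of_ues Z M hZ Amap γt g' (lt_of_le_of_lt hγ.1 h1) h2 c hc Hc
  · intro H γt hγt
    obtain ⟨K, kk, _, hkk, M₁, M₂, h1, h2, Q, hQ, hE⟩ := H γt hγt
    exact ues_of_lyap Z Amap γt (lt_of_le_of_lt hγ.1 hγt.1) K kk hkk M₁ M₂ h1 h2 Q hQ hE
end

section
/- Let Z ⊆ Σ^ℤ be a sofic shift and A : Z → ℝ^{n×n} a bounded matrix map whose state-transition matrices satisfy ‖S(k, z)‖ ≤ M γ₁^k for all k ∈ ℕ and z ∈ Z, for some M > 0 and γ₁ ∈ [0,1) (uniform exponential stability with rate γ₁). Then for every γ̃ ∈ (γ₁, 1), the series Q₊(z) := Σ_{k=0}^∞ γ̃^{−2k} S(k, z)ᵀ S(k, z) converges for every z ∈ Z and defines a map Q₊ : Z → S^n_+ satisfying I_n ⪯ Q₊(z) ⪯ (M² γ̃² / (γ̃² − γ₁²)) I_n for all z ∈ Z, and the identity A(z)ᵀ Q₊(σ(z)) A(z) = γ̃² Q₊(z) − γ̃² I_n for all z ∈ Z; in particular A(z)ᵀ Q₊(σ(z)) A(z) ≺ γ̃² Q₊(z).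 -/
open Set Filter Matrix

/-- The operator norm of a matrix, induced by the Euclidean norm. -/
noncomputable def opNormE {n : ℕ} (S : Matrix (Fin n) (Fin n) ℝ) : ℝ :=
  ‖LinearMap.toContinuousLinearMap (Matrix.toEuclideanLin S)‖

/-- The state-transition matrix `S(k, z) = A(σ^{k-1} z) ⋯ A(σ z) A(z)`, `S(0, z) = I`. -/
def transMat {n : ℕ} {A : Type*} (Amap : (ℤ → A) → Matrix (Fin n) (Fin n) ℝ)
    (z : ℤ → A) : ℕ → Matrix (Fin n) (Fin n) ℝ
  | 0 => 1
  | k + 1 => Amap (shiftMap^[k] z) * transMat Amap z k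

lemma shift_mem_aux {A : Type*} {Z : Set (ℤ → A)} (hZ : IsSofic Z) {z : ℤ → A} (hz : z ∈ Z) :
    shiftMap z ∈ Z := by
  obtain ⟨S, _, E, rfl⟩ := hZ
  obtain ⟨s, hs⟩ := hz
  exact ⟨fun k => s (k + 1), fun k => hs (k + 1)⟩

lemma transMat_succ_aux {n : ℕ} {A : Type*} (Amap : (ℤ → A) → Matrix (Fin n) (Fin n) ℝ)
    (z : ℤ → A) (k : ℕ) :
    transMat Amap z (k + 1) = transMat Amap (shiftMap z) k * Amap z := by
  induction k with
  | zero => simp [transMat]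
  | succ k ih =>
    rw [transMat, ih, transMat, ← Matrix.mul_assoc, Function.iterate_succ_apply]

lemma quad_le_aux {n : ℕ} (S : Matrix (Fin n) (Fin n) ℝ) (x : Fin n → ℝ) :
    (S *ᵥ x) ⬝ᵥ (S *ᵥ x) ≤ opNormE S ^ 2 * (x ⬝ᵥ x) := by
  have h := (LinearMap.toContinuousLinearMap (Matrix.toEuclideanLin S)).le_opNorm (WithLp.toLp 2 x)
  have h2 : ∀ y : Fin n → ℝ, ‖WithLp.toLp 2 y‖ ^ 2 = y ⬝ᵥ y := by
    intro y
    rw [EuclideanSpace.norm_sq_eq]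
    simp [dotProduct, sq]
  have h3 : (LinearMap.toContinuousLinearMap (Matrix.toEuclideanLin S)) (WithLp.toLp 2 x)
      = WithLp.toLp 2 (S *ᵥ x) := rfl
  rw [h3] at h
  rw [← h2, ← h2, ← mul_pow]
  exact pow_le_pow_left₀ (norm_nonneg _) h 2

lemma dot_nonneg_aux {n : ℕ} (x : Fin n → ℝ) : 0 ≤ x ⬝ᵥ x :=
  Finset.sum_nonneg fun i _ => mul_self_nonneg (x i)

lemma entry_le_aux {n : ℕ} (S : Matrix (Fin n) (Fin n) ℝ) (i j : Fin n) :
    |(Sᵀ * S) i j| ≤ opNormE S ^ 2 := by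
  have hi := quad_le_aux S (Pi.single i 1)
  have hj := quad_le_aux S (Pi.single j 1)
  simp only [Matrix.mulVec_single_one, single_one_dotProduct, Pi.single_eq_same, mul_one] at hi hj
  have hp : ∀ a b : Fin n → ℝ, |a ⬝ᵥ b| ≤ (a ⬝ᵥ a + b ⬝ᵥ b) / 2 := by
    intro a b
    have e1 : 0 ≤ (a - b) ⬝ᵥ (a - b) := dot_nonneg_aux (a - b)
    have e2 : 0 ≤ (a + b) ⬝ᵥ (a + b) := dot_nonneg_aux (a + b)
    simp only [sub_dotProduct, dotProduct_sub, add_dotProduct, dotProduct_add] at e1 e2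
    rw [dotProduct_comm b a] at e1 e2
    rw [abs_le]; constructor <;> linarith
  have h : (Sᵀ * S) i j = S.col i ⬝ᵥ S.col j := rfl
  rw [h]
  linarith [hp (S.col i) (S.col j)]

lemma hasSum_quad_aux {n : ℕ} {F : ℕ → Matrix (Fin n) (Fin n) ℝ} {Q : Matrix (Fin n) (Fin n) ℝ}
    (h : HasSum F Q) (x : Fin n → ℝ) :
    HasSum (fun k => x ⬝ᵥ (F k *ᵥ x)) (x ⬝ᵥ (Q *ᵥ x)) := by
  simp only [dotProduct, mulVec]
  refine hasSum_sum fun i _ => HasSum.mul_left _ (hasSum_sum fun j _ => HasSum.mul_right _ ?_)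
  exact Pi.hasSum.1 (Pi.hasSum.1 h i) j

theorem future_based_quadratic_construction
    {A : Type*} [Fintype A] {n : ℕ} (Z : Set (ℤ → A)) (hZ : IsSofic Z)
    (Amap : (ℤ → A) → Matrix (Fin n) (Fin n) ℝ)
    (hbdd : ∃ c : ℝ, ∀ z ∈ Z, opNormE (Amap z) ≤ c)
    (M γ₁ : ℝ) (hM : 0 < M) (hγ₁ : γ₁ ∈ Set.Ico (0 : ℝ) 1)
    (hS : ∀ (k : ℕ), ∀ z ∈ Z, opNormE (transMat Amap z k) ≤ M * γ₁ ^ k) :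
    ∀ γt ∈ Set.Ioo γ₁ 1,
      ∃ Q : (ℤ → A) → Matrix (Fin n) (Fin n) ℝ,
        (∀ z ∈ Z, ∀ i j : Fin n,
          HasSum
            (fun k : ℕ => (γt ^ (2 * k))⁻¹ *
              (((transMat Amap z k)ᵀ * transMat Amap z k) i j))
            (Q z i j)) ∧
        (∀ z ∈ Z,
          (Q z - (1 : Matrix (Fin n) (Fin n) ℝ)).PosSemidef ∧
          ((M ^ 2 * γt ^ 2 / (γt ^ 2 - γ₁ ^ 2)) • (1 : Matrix (Fin n) (Fin n) ℝ) -
              Q z).PosSemidef) ∧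
        (∀ z ∈ Z,
          (Amap z)ᵀ * Q (shiftMap z) * Amap z =
            γt ^ 2 • Q z - γt ^ 2 • (1 : Matrix (Fin n) (Fin n) ℝ)) ∧
        (∀ z ∈ Z,
          (γt ^ 2 • Q z - (Amap z)ᵀ * Q (shiftMap z) * Amap z).PosDef) := by
  rintro γ ⟨hγ1, -⟩
  obtain ⟨h0, -⟩ := hγ₁
  have hγ : 0 < γ := lt_of_le_of_lt h0 hγ1
  have hlt : γ₁ ^ 2 < γ ^ 2 := by gcongr
  set r : ℝ := γ₁ ^ 2 / γ ^ 2 with hr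
  have hr0 : 0 ≤ r := by positivity
  have hr1 : r < 1 := by rw [hr, div_lt_one (by positivity)]; exact hlt
  have hgeo : HasSum (fun k : ℕ => M ^ 2 * r ^ k) (M ^ 2 * γ ^ 2 / (γ ^ 2 - γ₁ ^ 2)) := by
    have := (hasSum_geometric_of_lt_one hr0 hr1).mul_left (M ^ 2)
    have e : M ^ 2 * γ ^ 2 / (γ ^ 2 - γ₁ ^ 2) = M ^ 2 * (1 - r)⁻¹ := by
      rw [hr, one_sub_div (by positivity), inv_div, mul_div_assoc]
    rw [e]
    exact this
  set F : (ℤ → A) → ℕ → Matrix (Fin n) (Fin n) ℝ := fun z k =>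
    (γ ^ (2 * k))⁻¹ • ((transMat Amap z k)ᵀ * transMat Amap z k) with hF
  have hn0 : ∀ z k, 0 ≤ opNormE (transMat Amap z k) := fun z k => norm_nonneg _
  have hc : ∀ z ∈ Z, ∀ k, (γ ^ (2 * k))⁻¹ * opNormE (transMat Amap z k) ^ 2 ≤ M ^ 2 * r ^ k := by
    intro z hz k
    have h1 : opNormE (transMat Amap z k) ^ 2 ≤ (M * γ₁ ^ k) ^ 2 :=
      pow_le_pow_left₀ (hn0 z k) (hS k z hz) 2
    calc _ ≤ (γ ^ (2 * k))⁻¹ * (M * γ₁ ^ k) ^ 2 := by gcongr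
      _ = _ := by rw [hr, div_pow, pow_mul]; ring
  have hsum : ∀ z ∈ Z, Summable (F z) := by
    intro z hz
    refine Pi.summable.2 fun i => Pi.summable.2 fun j => ?_
    refine Summable.of_norm_bounded hgeo.summable fun k => ?_
    simp only [hF, Matrix.smul_apply, smul_eq_mul, norm_mul, Real.norm_eq_abs]
    rw [abs_of_nonneg (by positivity : 0 ≤ (γ ^ (2 * k))⁻¹)]
    refine le_trans ?_ (hc z hz k)
    gcongr
    exact entry_le_aux _ i j
  have hQ : ∀ z ∈ Z, HasSum (F z) (∑' k, F z k) := fun z hz => (hsum z hz).hasSum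
  have hF0 : ∀ z, F z 0 = 1 := by intro z; simp [hF, transMat]
  have hquad : ∀ z k x, x ⬝ᵥ (F z k *ᵥ x) = (γ ^ (2 * k))⁻¹ *
      ((transMat Amap z k *ᵥ x) ⬝ᵥ (transMat Amap z k *ᵥ x)) := by
    intro z k x
    simp only [hF]
    rw [Matrix.smul_mulVec, dotProduct_smul, smul_eq_mul, ← Matrix.mulVec_mulVec,
      Matrix.dotProduct_mulVec, Matrix.vecMul_transpose]
  have hquad0 : ∀ z k x, 0 ≤ x ⬝ᵥ (F z k *ᵥ x) := by
    intro z k x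
    rw [hquad]
    have := dot_nonneg_aux (transMat Amap z k *ᵥ x)
    positivity
  have hsym : ∀ z, (∑' k, F z k).IsHermitian := by
    intro z
    rw [Matrix.IsHermitian, Matrix.conjTranspose_tsum]
    congr 1; ext1 k
    simp [hF, Matrix.conjTranspose_eq_transpose_of_trivial]
  have hid : ∀ z ∈ Z, (Amap z)ᵀ * (∑' k, F (shiftMap z) k) * Amap z =
            γ ^ 2 • (∑' k, F z k) - γ ^ 2 • (1 : Matrix (Fin n) (Fin n) ℝ) := by
    intro z hz
    have h1 := ((hQ _ (shift_mem_aux hZ hz)).mul_left (Amap z)ᵀ).mul_right (Amap z)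
    have h2 := ((hasSum_nat_add_iff' 1).2 (hQ z hz)).const_smul (γ ^ 2)
    rw [Finset.sum_range_one, hF0, smul_sub] at h2
    refine h1.unique ?_
    have e : (fun k => (Amap z)ᵀ * F (shiftMap z) k * Amap z) =
        fun k => γ ^ 2 • F z (k + 1) := by
      funext k
      simp only [hF]
      rw [transMat_succ_aux, smul_smul, Matrix.transpose_mul, Matrix.mul_smul, Matrix.smul_mul]
      congr 1
      · field_simp
        try ring
      · simp only [Matrix.mul_assoc]
    rw [e]
    exact h2
  refine ⟨fun z => ∑' k, F z k, ?_, ?_, hid, ?_⟩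
  · intro z hz i j
    exact Pi.hasSum.1 (Pi.hasSum.1 (hQ z hz) i) j
  · intro z hz
    refine ⟨Matrix.PosSemidef.of_dotProduct_mulVec_nonneg ((hsym z).sub Matrix.isHermitian_one) fun x => ?_,
      Matrix.PosSemidef.of_dotProduct_mulVec_nonneg (Matrix.IsHermitian.sub ?_ (hsym z)) fun x => ?_⟩
    · have h := le_hasSum (hasSum_quad_aux (hQ z hz) x) 0 (fun k _ => hquad0 z k x)
      rw [hF0] at h
      simp only [star_trivial, Matrix.sub_mulVec, dotProduct_sub]
      linarith
    · rw [Matrix.IsHermitian]; simp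
    · have h := hasSum_le (fun k => ?_) (hasSum_quad_aux (hQ z hz) x) (hgeo.mul_right (x ⬝ᵥ x))
      · simp only [star_trivial, Matrix.sub_mulVec, dotProduct_sub, Matrix.smul_mulVec,
          Matrix.one_mulVec, dotProduct_smul, smul_eq_mul]
        linarith
      · have hx := dot_nonneg_aux x
        rw [hquad]
        calc _ ≤ (γ ^ (2 * k))⁻¹ * (opNormE (transMat Amap z k) ^ 2 * (x ⬝ᵥ x)) := by
              gcongr; exact quad_le_aux _ x
          _ ≤ _ := by rw [← mul_assoc]; exact mul_le_mul_of_nonneg_right (hc z hz k) hx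
  · intro z hz
    simp only [hid z hz, sub_sub_cancel]
    exact Matrix.PosDef.one.smul (by positivity)
end
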